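/- Let n, m be integers with 2 ≤ n < m. Define G = −6m^2 − 5mn + 4m^2 n − 6n^2 + 4mn^2 + 4m^2 n^2, H = −22m + 10m^2 − 22n + 25mn + 30m^2 n + 10n^2 + 30mn^2 + 20m^2 n^2, F = 12m^3 − 36m^4 + 70m^2 n + 60m^3 n − 100m^4 n + 70mn^2 + 211m^2 n^2 + 2m^3 n^2 − 40m^4 n^2 + 12n^3 + 60mn^3 + 2m^2 n^3 + 40m^4 n^3 − 36n^4 − 100mn^4 − 40m^2 n^4 + 40m^3 n^4 + 16m^4 n^4, and set c* = −(2m + n + 2mn)(m + 2n + 2mn)/(m + n) and λ* = −(m + n)·F / (7(1+2m)(1+2n)(m + n + mn)·G·H). Then G ≠ 0, H ≠ 0, and p_n(c*, λ*) = 0 and p_m(c*, λ*) = 0. -/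

import Mathlib

/-- The polynomial `f(c,n)` from the type-C truncation polynomial. -/
noncomputable def fC (c n : ℂ) : ℂ :=
  -204 * c ^ 2 - 192 * c ^ 3 + 171 * c ^ 4 + 952 * c * n - 4612 * c ^ 2 * n
    + 2348 * c ^ 3 * n - 38 * c ^ 4 * n + 1568 * n ^ 2 - 7708 * c * n ^ 2
    + 1788 * c ^ 2 * n ^ 2 + 2401 * c ^ 3 * n ^ 2 - 74 * c ^ 4 * n ^ 2
    + 560 * n ^ 3 - 18936 * c * n ^ 3 + 22280 * c ^ 2 * n ^ 3
    - 2112 * c ^ 3 * n ^ 3 + 8 * c ^ 4 * n ^ 3 - 16304 * n ^ 4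
    + 18640 * c * n ^ 4 + 3420 * c ^ 2 * n ^ 4 - 364 * c ^ 3 * n ^ 4
    + 8 * c ^ 4 * n ^ 4 - 17408 * n ^ 5 + 27680 * c * n ^ 5
    - 10576 * c ^ 2 * n ^ 5 + 304 * c ^ 3 * n ^ 5 - 3264 * n ^ 6
    - 3072 * c * n ^ 6 + 2736 * c ^ 2 * n ^ 6

/-- The polynomial `g(c,n)` from the type-C truncation polynomial. -/
noncomputable def gC (c n : ℂ) : ℂ :=
  -14 * (c - 1) * (2 * c - 1) * (22 + 5 * c) * (n - 2) * (n - 1)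
    * (3 * c + 10 * n + 2 * c * n + 12 * n ^ 2)
    * (5 * c + 28 * n + 2 * c * n + 40 * n ^ 2)

/-- The polynomial `h(c,n)` from the type-C truncation polynomial. -/
noncomputable def hC (c n : ℂ) : ℂ :=
  49 * (c - 1) ^ 2 * (22 + 5 * c) ^ 2
    * (21 * c ^ 2 + 70 * c * n - 14 * c ^ 2 * n + 200 * n ^ 2 - 135 * c * n ^ 2
      - 26 * c ^ 2 * n ^ 2 + 380 * n ^ 3 - 176 * c * n ^ 3 + 8 * c ^ 2 * n ^ 3
      + 436 * n ^ 4 + 132 * c * n ^ 4 + 8 * c ^ 2 * n ^ 4 + 448 * n ^ 5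
      + 112 * c * n ^ 5 + 336 * n ^ 6)

/-- The type-C truncation polynomial `p_n(c,λ) = f(c,n) + λ·g(c,n) + λ²·h(c,n)`. -/
noncomputable def pC (n c lam : ℂ) : ℂ := fC c n + lam * gC c n + lam ^ 2 * hC c n

/-!
In terms of the shifted level `ψ = k + n + 1` the central charge of `W^k(sp_{2n}, f_prin)` is
`-n ((2n+1)ψ - (n+1)) (2(2n-1)ψ - (2n+1)) / ψ`, and `c*` is its value at `ψ = n / (2(m+n))`. With
this choice of parameter the discriminant of `p_n(c*, λ)` in `λ` is a square in `ℚ(n, m)`: the line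
`c = c*` meets `V(I_n)` in two points rational in `n` and `m`, and `p_n(c*, λ)` splits into two
explicit factors linear in `λ`, the first of which vanishes at `λ*`. Since `(c*, λ*)` is symmetric
in `n` and `m`, it lies on `V(I_m)` as well.
-/

namespace TypeCIntersection

section CommRing

variable {R : Type*} [CommRing R]

/-- The polynomial `G` in the denominator of `λ*`. The coefficient ring is arbitrary so that its
positivity can be established over an ordered ring. -/
def polyG (n m : R) : R :=
  -6 * m ^ 2 - 5 * m * n + 4 * m ^ 2 * n - 6 * n ^ 2 + 4 * m * n ^ 2 + 4 * m ^ 2 * n ^ 2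

/-- The polynomial `H` in the denominator of `λ*`. -/
def polyH (n m : R) : R :=
  -22 * m + 10 * m ^ 2 - 22 * n + 25 * m * n + 30 * m ^ 2 * n
    + 10 * n ^ 2 + 30 * m * n ^ 2 + 20 * m ^ 2 * n ^ 2

/-- The polynomial `F` in the numerator of `λ*`. -/
def polyF (n m : R) : R :=
  12 * m ^ 3 - 36 * m ^ 4 + 70 * m ^ 2 * n + 60 * m ^ 3 * n
    - 100 * m ^ 4 * n + 70 * m * n ^ 2 + 211 * m ^ 2 * n ^ 2
    + 2 * m ^ 3 * n ^ 2 - 40 * m ^ 4 * n ^ 2 + 12 * n ^ 3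
    + 60 * m * n ^ 3 + 2 * m ^ 2 * n ^ 3 + 40 * m ^ 4 * n ^ 3
    - 36 * n ^ 4 - 100 * m * n ^ 4 - 40 * m ^ 2 * n ^ 4
    + 40 * m ^ 3 * n ^ 4 + 16 * m ^ 4 * n ^ 4

/-- The denominator of `λ*`. -/
def lambdaDenom (n m : R) : R :=
  7 * (1 + 2 * m) * (1 + 2 * n) * (m + n + m * n) * polyG n m * polyH n m

/-- The counterpart of `polyG` for the second point of `V(I_n)` on the line `c = c*`. If `m'` is the
other parameter with the same `c*`, that is, `2 (n+1) (m+n) (m'+n) = n^2 (2n-1)`, then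
`2 (n+1)^2 (m+n)^2 polyG n m' = n^2 conjG n m`. -/
def conjG (n m : R) : R :=
  n ^ 2 * (2 * n - 1) ^ 2 * (2 * n ^ 2 + 2 * n - 3)
    - n * (n + 1) * (2 * n - 1) * (8 * n ^ 2 + 4 * n - 7) * (m + n)
    + 2 * (n + 1) ^ 2 * (4 * n ^ 2 - 7) * (m + n) ^ 2

/-- The counterpart of `polyF` for the second point of `V(I_n)` on the line `c = c*`: with
`m'` as for `conjG`, `4 (n+1)^3 (m+n)^4 polyF n m' = n^4 (2n-1) conjF n m`. -/
def conjF (n m : R) : R :=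
  n ^ 4 * (2 * n - 1) ^ 3 * (2 * n + 1) * (2 * n ^ 2 + 2 * n - 9)
    + n ^ 2 * (2 * n - 1) ^ 2
      * (6 + 102 * n + 201 * n ^ 2 + 80 * n ^ 3 - 60 * n ^ 4 - 32 * n ^ 5) * (m + n)
    + n * (n + 1) * (2 * n - 1) * (n - 2)
      * (-17 + 84 * n + 344 * n ^ 2 + 312 * n ^ 3 + 96 * n ^ 4) * (m + n) ^ 2
    + 4 * (n + 1) ^ 2
      * (-17 - 19 * n + 151 * n ^ 2 + 120 * n ^ 3 - 20 * n ^ 4 - 32 * n ^ 5) * (m + n) ^ 3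
    + 4 * (n + 1) ^ 3 * (2 * n + 1) * (4 * n ^ 2 - 19) * (m + n) ^ 4

theorem polyG_comm (n m : R) : polyG n m = polyG m n := by
  unfold polyG; ring

theorem polyH_comm (n m : R) : polyH n m = polyH m n := by
  unfold polyH; ring

theorem polyF_comm (n m : R) : polyF n m = polyF m n := by
  unfold polyF; ring

theorem lambdaDenom_comm (n m : R) : lambdaDenom n m = lambdaDenom m n := by
  rw [lambdaDenom, lambdaDenom, polyG_comm, polyH_comm]; ring

end CommRing

section Positivity

variable {R : Type*} [CommRing R] [LinearOrder R] [IsStrictOrderedRing R] {n m : R}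

theorem polyG_pos (hn : 2 ≤ n) (hm : 2 ≤ m) : 0 < polyG n m := by
  have : 0 < n := by linarith
  have : 0 < m := by linarith
  have : 0 ≤ n ^ 2 - 4 := by nlinarith
  have : 0 ≤ m ^ 2 - 4 := by nlinarith
  have : 0 ≤ n - 2 := sub_nonneg.2 hn
  have : 0 ≤ m - 2 := sub_nonneg.2 hm
  calc
    0 < 2 * m ^ 2 * (n ^ 2 - 4) + 2 * n ^ 2 * (m ^ 2 - 4) + 4 * (m * n) * ((m - 2) + (n - 2))
        + 2 * m ^ 2 + 2 * n ^ 2 + 11 * (m * n) := by positivity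
    _ = polyG n m := by unfold polyG; ring

theorem polyH_pos (hn : 1 ≤ n) (hm : 1 ≤ m) : 0 < polyH n m := by
  have : 0 < n := by linarith
  have : 0 < m := by linarith
  have : 0 ≤ m * n - 1 := sub_nonneg.2 (one_le_mul_of_one_le_of_one_le hm hn)
  calc
    0 < (m + n) * (30 * (m * n - 1) + 8) + 10 * m ^ 2 + 25 * (m * n) + 10 * n ^ 2
        + 20 * (m * n) ^ 2 := by positivity
    _ = polyH n m := by unfold polyH; ring

theorem lambdaDenom_pos (hn : 2 ≤ n) (hm : 2 ≤ m) : 0 < lambdaDenom n m := by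
  have : 0 < n := by linarith
  have : 0 < m := by linarith
  have hG : 0 < polyG n m := polyG_pos hn hm
  have hH : 0 < polyH n m := polyH_pos (by linarith) (by linarith)
  unfold lambdaDenom
  positivity

end Positivity

/-- The factor `7(c-1)(22+5c)` that accompanies `λ` in `p_n(c,λ)`: it divides `g(c,n)`, and its
square divides `h(c,n)`. -/
noncomputable def lambdaScale (c : ℂ) : ℂ := 7 * (c - 1) * (22 + 5 * c)

/-- The coordinate `c*` of the intersection point. -/
noncomputable def cStar (n m : ℂ) : ℂ :=
  -(2 * m + n + 2 * m * n) * (m + 2 * n + 2 * m * n) / (m + n)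

/-- The coordinate `λ*` of the intersection point. -/
noncomputable def lambdaStar (n m : ℂ) : ℂ := -(m + n) * polyF n m / lambdaDenom n m

theorem cStar_comm (n m : ℂ) : cStar n m = cStar m n := by
  unfold cStar; ring

theorem lambdaStar_comm (n m : ℂ) : lambdaStar n m = lambdaStar m n := by
  rw [lambdaStar, lambdaStar, polyF_comm, lambdaDenom_comm, add_comm]

section Factorization

variable {n m : ℂ} (hs : m + n ≠ 0)

include hs

theorem pow_four_mul_fC_cStar : (m + n) ^ 4 * fC (cStar n m) n
    = (2 * n + 1) ^ 2 * (polyF n m * conjF n m) := by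
  unfold fC cStar polyF conjF
  field_simp
  ring

theorem pow_three_mul_gC_cStar : (m + n) ^ 3 * gC (cStar n m) n
    = (2 * n + 1) ^ 2 * lambdaScale (cStar n m)
      * (polyF n m * conjG n m + conjF n m * polyG n m) := by
  unfold gC lambdaScale cStar polyF conjG conjF polyG
  field_simp
  ring

theorem sq_mul_hC_cStar : (m + n) ^ 2 * hC (cStar n m) n
    = (2 * n + 1) ^ 2 * lambdaScale (cStar n m) ^ 2 * (polyG n m * conjG n m) := by
  unfold hC lambdaScale cStar polyG conjG
  field_simp
  ring

theorem pow_four_mul_pC_cStar (lam : ℂ) : (m + n) ^ 4 * pC n (cStar n m) lam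
    = (2 * n + 1) ^ 2
      * (polyF n m + (m + n) * lambdaScale (cStar n m) * lam * polyG n m)
      * (conjF n m + (m + n) * lambdaScale (cStar n m) * lam * conjG n m) := by
  unfold pC
  linear_combination pow_four_mul_fC_cStar hs + (m + n) * lam * pow_three_mul_gC_cStar hs
    + (m + n) ^ 2 * lam ^ 2 * sq_mul_hC_cStar hs

theorem lambdaDenom_eq_mul_lambdaScale : lambdaDenom n m
    = (m + n) ^ 2 * lambdaScale (cStar n m) * polyG n m := by
  unfold lambdaDenom lambdaScale cStar polyH
  field_simp
  ring

theorem pC_cStar_lambdaStar_eq_zero (hden : lambdaDenom n m ≠ 0) :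
    pC n (cStar n m) (lambdaStar n m) = 0 := by
  have hfirst : polyF n m + (m + n) * lambdaScale (cStar n m) * lambdaStar n m * polyG n m = 0 := by
    have hlam : lambdaDenom n m * lambdaStar n m = -(m + n) * polyF n m :=
      mul_div_cancel₀ _ hden
    rw [lambdaDenom_eq_mul_lambdaScale hs] at hlam
    apply mul_left_cancel₀ hs
    linear_combination hlam
  have hprod := pow_four_mul_pC_cStar hs (lambdaStar n m)
  rw [hfirst, mul_zero, zero_mul] at hprod
  exact (mul_eq_zero.1 hprod).resolve_left (pow_ne_zero 4 hs)

end Factorization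

end TypeCIntersection

open TypeCIntersection in
theorem typeC_first_intersection_point_general (n m : ℝ) (hn : 2 ≤ n) (hm : 2 ≤ m) :
    polyG (n : ℂ) m ≠ 0 ∧ polyH (n : ℂ) m ≠ 0
      ∧ pC n (cStar n m) (lambdaStar n m) = 0 ∧ pC m (cStar n m) (lambdaStar n m) = 0 := by
  have hs : (m + n : ℂ) ≠ 0 := by exact_mod_cast (by linarith : 0 < m + n).ne'
  have hden : lambdaDenom (n : ℂ) m ≠ 0 := by
    have hcast : lambdaDenom (n : ℂ) m = (lambdaDenom n m : ℝ) := by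
      simp [lambdaDenom, polyG, polyH]
    exact hcast ▸ Complex.ofReal_ne_zero.2 (lambdaDenom_pos hn hm).ne'
  refine ⟨?_, ?_, pC_cStar_lambdaStar_eq_zero hs hden, ?_⟩
  · exact right_ne_zero_of_mul (left_ne_zero_of_mul hden)
  · exact right_ne_zero_of_mul hden
  · rw [cStar_comm, lambdaStar_comm]
    exact pC_cStar_lambdaStar_eq_zero (by rwa [add_comm]) (by rwa [lambdaDenom_comm])

/-- The first nontrivial intersection point of the type-C truncation curves
`V(I_n)` and `V(I_m)` lies on both curves. -/
theorem typeC_first_intersection_point (n m : ℤ) (hn : 2 ≤ n) (hnm : n < m)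
    (nn mm : ℂ) (hnn : nn = (n : ℂ)) (hmm : mm = (m : ℂ))
    (G H F cs ls : ℂ)
    (hG : G = -6 * mm ^ 2 - 5 * mm * nn + 4 * mm ^ 2 * nn - 6 * nn ^ 2
      + 4 * mm * nn ^ 2 + 4 * mm ^ 2 * nn ^ 2)
    (hH : H = -22 * mm + 10 * mm ^ 2 - 22 * nn + 25 * mm * nn + 30 * mm ^ 2 * nn
      + 10 * nn ^ 2 + 30 * mm * nn ^ 2 + 20 * mm ^ 2 * nn ^ 2)
    (hF : F = 12 * mm ^ 3 - 36 * mm ^ 4 + 70 * mm ^ 2 * nn + 60 * mm ^ 3 * nn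
      - 100 * mm ^ 4 * nn + 70 * mm * nn ^ 2 + 211 * mm ^ 2 * nn ^ 2
      + 2 * mm ^ 3 * nn ^ 2 - 40 * mm ^ 4 * nn ^ 2 + 12 * nn ^ 3
      + 60 * mm * nn ^ 3 + 2 * mm ^ 2 * nn ^ 3 + 40 * mm ^ 4 * nn ^ 3
      - 36 * nn ^ 4 - 100 * mm * nn ^ 4 - 40 * mm ^ 2 * nn ^ 4
      + 40 * mm ^ 3 * nn ^ 4 + 16 * mm ^ 4 * nn ^ 4)
    (hcs : cs = -(2 * mm + nn + 2 * mm * nn) * (mm + 2 * nn + 2 * mm * nn)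
        / (mm + nn))
    (hls : ls = -(mm + nn) * F
        / (7 * (1 + 2 * mm) * (1 + 2 * nn) * (mm + nn + mm * nn) * G * H)) :
    G ≠ 0 ∧ H ≠ 0 ∧ pC nn cs ls = 0 ∧ pC mm cs ls = 0 := by
  subst hnn hmm hG hH hF hcs hls
  have hreal := typeC_first_intersection_point_general n m (mod_cast hn) (mod_cast hn.trans hnm.le)
  simp only [Complex.ofReal_intCast] at hreal
  exact hreal
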